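/- With p₀(n) := 205n² − 160n + 32 and p₂(n) := 215n² − 180n + 36, the series identity ∑_{n≥1} (−1/2^10)^n · ((1)_n)^5 / ((1/2)_n)^5 · [ −p₂(n)/n^8 + (H_n^{(3)} + H_{2n}^{(3)}) p₀(n)/n^5 ] = −2 ζ(3)² holds, where ζ is the Riemann zeta function. -/

import Mathlib

/-- The rising factorial (Pochhammer symbol) `(a)ₙ = a(a+1)⋯(a+n-1)`. -/
noncomputable def risingFactorial (a : ℝ) (n : ℕ) : ℝ :=
  ∏ i ∈ Finset.range n, (a + i)

/-- The generalized harmonic number `H_n^{(s)} = ∑_{k=1}^n 1/k^s`. -/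
noncomputable def genHarmonic (s n : ℕ) : ℝ :=
  ∑ k ∈ Finset.range n, 1 / ((k : ℝ) + 1) ^ s

open Filter Topology Finset
open scoped Nat

/-- The polynomial part of the certificate `wzG` multiplying the harmonic numbers. -/
def certPoly (n k : ℝ) : ℝ :=
  77 + 254 * k + 344 * k ^ 2 + 248 * k ^ 3 + 101 * k ^ 4 + 22 * k ^ 5 + 2 * k ^ 6 + 635 * n
    + 1780 * n * k + 1992 * n * k ^ 2 + 1136 * n * k ^ 3 + 341 * n * k ^ 4 + 48 * n * k ^ 5
    + 2 * n * k ^ 6 + 2225 * n ^ 2 + 5154 * n ^ 2 * k + 4576 * n ^ 2 * k ^ 2 + 1936 * n ^ 2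
    * k ^ 3 + 381 * n ^ 2 * k ^ 4 + 26 * n ^ 2 * k ^ 5 + 4295 * n ^ 3 + 7896 * n ^ 3 * k +
    5216 * n ^ 3 * k ^ 2 + 1456 * n ^ 3 * k ^ 3 + 141 * n ^ 3 * k ^ 4 + 4935 * n ^ 4 + 6754
    * n ^ 4 * k + 2952 * n ^ 4 * k ^ 2 + 408 * n ^ 4 * k ^ 3 + 3377 * n ^ 5 + 3060 * n ^ 5 *
    k + 664 * n ^ 5 * k ^ 2 + 1275 * n ^ 6 + 574 * n ^ 6 * k + 205 * n ^ 7

/-- The harmonic-free polynomial part of the certificate `wzG`. -/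
def certRemainder (n k : ℝ) : ℝ :=
  6 + 15 * k + 14 * k ^ 2 + 6 * k ^ 3 + k ^ 4 + 12 * n + 31 * n * k + 24 * n * k ^ 2 + 6 * n
    * k ^ 3 - 4 * n ^ 2 + 15 * n ^ 2 * k + 10 * n ^ 2 * k ^ 2 - 20 * n ^ 3 - n ^ 3 * k - 10
    * n ^ 4

/-- The first component of the WZ pair. -/
noncomputable def wzF (n k : ℕ) : ℝ :=
  (-1) ^ n * ((n + k)! : ℝ) ^ 4 * (n ! : ℝ) ^ 6 / (((2 * n + k + 1)! : ℝ) ^ 4 * ((2 * n)! : ℝ)) *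
    (3 * n + 2 * k + 2) * (genHarmonic 3 (n + k) + genHarmonic 3 (2 * n + k + 1))

/-- The second component of the WZ pair. -/
noncomputable def wzG (n k : ℕ) : ℝ :=
  (-1) ^ n * ((n + k)! : ℝ) ^ 4 * (n ! : ℝ) ^ 6 /
      (((2 * n + k + 2)! : ℝ) ^ 4 * ((2 * n + 2)! : ℝ)) *
    (certPoly n k * (genHarmonic 3 (n + k) + genHarmonic 3 (2 * n + k + 2)) + certRemainder n k)

lemma genHarmonic_succ (s n : ℕ) :
    genHarmonic s (n + 1) = genHarmonic s n + 1 / ((n : ℝ) + 1) ^ s :=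
  sum_range_succ _ _

lemma genHarmonic_nonneg (s n : ℕ) : 0 ≤ genHarmonic s n :=
  sum_nonneg fun _ _ => by positivity

lemma genHarmonic_three_le_two (n : ℕ) : genHarmonic 3 n ≤ 2 := by
  suffices h : genHarmonic 3 n ≤ 2 - 2 / ((n : ℝ) + 1) by
    have : 0 ≤ 2 / ((n : ℝ) + 1) := by positivity
    linarith
  induction n with
  | zero => simp [genHarmonic]
  | succ n ih =>
    rw [genHarmonic_succ]
    have key : 1 / ((n : ℝ) + 1) ^ 3 ≤ 2 / ((n : ℝ) + 1) - 2 / ((n : ℝ) + 1 + 1) := by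
      rw [div_sub_div _ _ (by positivity) (by positivity),
        div_le_div_iff₀ (by positivity) (by positivity)]
      have : (0 : ℝ) ≤ n := n.cast_nonneg
      nlinarith [mul_nonneg this this, mul_nonneg (mul_nonneg this this) this]
    push_cast
    linarith

lemma certPoly_recurrence (n k : ℝ) :
    -(3 * n + 2 * k + 5) * (n + k + 1) ^ 4 * (n + 1) ^ 6 -
        (3 * n + 2 * k + 2) * (2 * n + 1) * (2 * n + 2) * (2 * n + k + 2) ^ 4 *
          (2 * n + k + 3) ^ 4 =
      (n + k + 1) ^ 4 * certPoly n (k + 1) - (2 * n + k + 3) ^ 4 * certPoly n k := by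
  unfold certPoly
  ring

lemma certRemainder_recurrence (n k : ℝ) :
    -(3 * n + 2 * k + 5) * (n + k + 1) * (n + 1) ^ 6 +
        (3 * n + 2 * k + 2) * (2 * n + 1) * (2 * n + 2) *
          ((2 * n + k + 2) ^ 4 * (2 * n + k + 3) + (2 * n + k + 2) * (2 * n + k + 3) ^ 4) =
      (n + k + 1) ^ 4 * certRemainder n (k + 1) - (2 * n + k + 3) ^ 4 * certRemainder n k +
        (n + k + 1) * certPoly n (k + 1) + (2 * n + k + 3) * certPoly n k := by
  unfold certPoly certRemainder
  ring

lemma wz_identity (n k : ℕ) : wzF (n + 1) k - wzF n k = wzG n (k + 1) - wzG n k := by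
  have hX : (n : ℝ) + k + 1 ≠ 0 := by positivity
  have hY : 2 * (n : ℝ) + k + 2 ≠ 0 := by positivity
  have hZ : 2 * (n : ℝ) + k + 3 ≠ 0 := by positivity
  have hb : ((2 * n + k + 1)! : ℝ) ≠ 0 := by positivity
  have hg : ((2 * n)! : ℝ) ≠ 0 := by positivity
  have hu : 2 * (n : ℝ) + 1 ≠ 0 := by positivity
  have hv : 2 * (n : ℝ) + 2 ≠ 0 := by positivity
  have fX : ((n + k + 1)! : ℝ) = (n + k + 1) * (n + k)! := by
    rw [Nat.factorial_succ]; push_cast; ring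
  have fY : ((2 * n + k + 2)! : ℝ) = (2 * n + k + 2) * (2 * n + k + 1)! := by
    rw [Nat.factorial_succ]; push_cast; ring
  have fZ : ((2 * n + k + 3)! : ℝ) = (2 * n + k + 3) * (2 * n + k + 2) * (2 * n + k + 1)! := by
    rw [Nat.factorial_succ]; push_cast; rw [fY]; ring
  have fg : ((2 * n + 2)! : ℝ) = (2 * n + 2) * (2 * n + 1) * (2 * n)! := by
    rw [Nat.factorial_succ, Nat.factorial_succ]; push_cast; ring
  have ff : ((n + 1)! : ℝ) = (n + 1) * n ! := by
    rw [Nat.factorial_succ]; push_cast; ring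
  have HX : genHarmonic 3 (n + k + 1) = genHarmonic 3 (n + k) + 1 / ((n : ℝ) + k + 1) ^ 3 := by
    rw [genHarmonic_succ]; push_cast; ring
  have HY : genHarmonic 3 (2 * n + k + 2) =
      genHarmonic 3 (2 * n + k + 1) + 1 / (2 * (n : ℝ) + k + 2) ^ 3 := by
    rw [genHarmonic_succ]; push_cast; ring
  have HZ : genHarmonic 3 (2 * n + k + 3) =
      genHarmonic 3 (2 * n + k + 1) + 1 / (2 * (n : ℝ) + k + 2) ^ 3 +
        1 / (2 * (n : ℝ) + k + 3) ^ 3 := by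
    rw [genHarmonic_succ, HY]; push_cast; ring
  have e0 := certPoly_recurrence n k
  have e1 := certRemainder_recurrence n k
  unfold wzF wzG
  rw [show n + 1 + k = n + k + 1 by ring, show 2 * (n + 1) + k + 1 = 2 * n + k + 3 by ring,
    show 2 * (n + 1) = 2 * n + 2 by ring, show n + (k + 1) = n + k + 1 by ring,
    show 2 * n + (k + 1) + 2 = 2 * n + k + 3 by ring, fX, fY, fZ, fg, ff, HX, HY, HZ]
  push_cast
  generalize genHarmonic 3 (n + k) = h₁
  generalize genHarmonic 3 (2 * n + k + 1) = h₂
  generalize ((2 * n + k + 1)! : ℝ) = b at *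
  generalize ((2 * n)! : ℝ) = g at *
  generalize ((n + k)! : ℝ) = a at *
  generalize (n ! : ℝ) = f at *
  generalize certPoly n (k + 1) = p₁ at *
  generalize certPoly n k = p at *
  generalize certRemainder n (k + 1) = r₁ at *
  generalize certRemainder n k = r at *
  have hz : 3 * ((n : ℝ) + 1) + 2 * k + 2 = 3 * n + 2 * k + 5 := by ring
  rw [hz]
  generalize (n : ℝ) + k + 1 = X at *
  generalize 2 * (n : ℝ) + k + 2 = Y at *
  generalize 2 * (n : ℝ) + k + 3 = Z at *
  generalize 3 * (n : ℝ) + 2 * k + 2 = c at *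
  generalize 3 * (n : ℝ) + 2 * k + 5 = c₁ at *
  generalize 2 * (n : ℝ) + 1 = u at *
  generalize 2 * (n : ℝ) + 2 = v at *
  generalize (n : ℝ) + 1 = m at *
  have hpow : (-1 : ℝ) ^ (n + 1) = -(-1) ^ n := by ring
  rw [hpow]
  generalize (-1 : ℝ) ^ n = σ
  rw [← sub_eq_zero]
  have key : σ * a ^ 4 * f ^ 6 / ((Y * Z * b) ^ 4 * (u * v * g)) *
      ((h₁ + h₂ + 1 / Y ^ 3 + 1 / Z ^ 3) *
        (-c₁ * X ^ 4 * m ^ 6 - c * u * v * Y ^ 4 * Z ^ 4 - (X ^ 4 * p₁ - Z ^ 4 * p)) +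
        (-c₁ * X * m ^ 6 + c * u * v * (Y ^ 4 * Z + Y * Z ^ 4) -
          (X ^ 4 * r₁ - Z ^ 4 * r + X * p₁ + Z * p))) = 0 := by
    rw [e0, e1]; ring
  rw [← key]
  field_simp
  ring

lemma abs_certPoly_le (n k : ℕ) : |certPoly n k| ≤ 10 ^ 4 * ((n : ℝ) + k + 1) ^ 7 := by
  rw [abs_of_nonneg (by unfold certPoly; positivity), ← sub_nonneg]
  unfold certPoly
  ring_nf
  positivity

lemma abs_certRemainder_le (n k : ℕ) : |certRemainder n k| ≤ 10 ^ 4 * ((n : ℝ) + k + 1) ^ 7 := by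
  rw [abs_le, neg_le_iff_add_nonneg, ← sub_nonneg (b := certRemainder n k)]
  unfold certRemainder
  constructor
  · ring_nf
    positivity
  · ring_nf
    positivity

lemma factorial_sq_le_factorial_two_mul (n : ℕ) : (n ! : ℝ) ^ 2 ≤ (2 * n)! := by
  have := Nat.le_of_dvd (Nat.factorial_pos _) (Nat.factorial_mul_factorial_dvd_factorial_add n n)
  rw [← two_mul] at this
  rw [sq]
  exact_mod_cast this

lemma mul_factorial_le (n k : ℕ) :
    ((n : ℝ) + k + 1) * ((n + k)! * n !) ≤ (2 * n + k + 1)! := by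
  have := Nat.le_of_dvd (Nat.factorial_pos _)
    (Nat.factorial_mul_factorial_dvd_factorial_add (n + k + 1) n)
  rw [Nat.factorial_succ, show n + k + 1 + n = 2 * n + k + 1 by ring, mul_assoc] at this
  exact_mod_cast this

lemma abs_wzF_le (n k : ℕ) : |wzF n k| ≤ 12 / ((n + 1) * ((k : ℝ) + 1) ^ 2) := by
  have h1 := genHarmonic_nonneg 3 (n + k)
  have h2 := genHarmonic_nonneg 3 (2 * n + k + 1)
  have h3 := genHarmonic_three_le_two (n + k)
  have h4 := genHarmonic_three_le_two (2 * n + k + 1)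
  have hc : ((n + k)! : ℝ) ^ 4 * (n ! : ℝ) ^ 6 / (((2 * n + k + 1)! : ℝ) ^ 4 * ((2 * n)! : ℝ)) ≤
      1 / ((n : ℝ) + k + 1) ^ 4 := by
    rw [div_le_div_iff₀ (by positivity) (by positivity)]
    have := mul_le_mul (pow_le_pow_left₀ (by positivity) (mul_factorial_le n k) 4)
      (factorial_sq_le_factorial_two_mul n) (by positivity) (by positivity)
    linarith
  calc |wzF n k| = ((n + k)! : ℝ) ^ 4 * (n ! : ℝ) ^ 6 /
          (((2 * n + k + 1)! : ℝ) ^ 4 * ((2 * n)! : ℝ)) *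
        (3 * n + 2 * k + 2) * (genHarmonic 3 (n + k) + genHarmonic 3 (2 * n + k + 1)) := by
        unfold wzF
        rw [abs_mul, abs_mul, abs_div, abs_mul, abs_mul, abs_pow, abs_neg, abs_one, one_pow,
          one_mul, abs_of_nonneg (add_nonneg h1 h2)]
        congr 2 <;> [congr 1; skip]
        · congr 1 <;> exact abs_of_nonneg (by positivity)
        all_goals exact abs_of_nonneg (by positivity)
    _ ≤ 1 / ((n : ℝ) + k + 1) ^ 4 * (3 * ((n : ℝ) + k + 1)) * 4 := by
        have hn : (0 : ℝ) ≤ n := n.cast_nonneg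
        have hk : (0 : ℝ) ≤ k := k.cast_nonneg
        gcongr <;> linarith
    _ = 12 / ((n : ℝ) + k + 1) ^ 3 := by
        field_simp
        norm_num
    _ ≤ 12 / ((n + 1) * ((k : ℝ) + 1) ^ 2) := by
        have hn : (0 : ℝ) ≤ n := n.cast_nonneg
        have hk : (0 : ℝ) ≤ k := k.cast_nonneg
        rw [pow_succ']
        gcongr <;> linarith

lemma abs_wzG_le (n k : ℕ) : |wzG n k| ≤ 10 ^ 5 / (((n : ℝ) + 1) ^ 2 * (n + k + 1)) := by
  have hn : (0 : ℝ) ≤ n := n.cast_nonneg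
  have hk : (0 : ℝ) ≤ k := k.cast_nonneg
  have h1 := genHarmonic_nonneg 3 (n + k)
  have h2 := genHarmonic_nonneg 3 (2 * n + k + 2)
  have h3 := genHarmonic_three_le_two (n + k)
  have h4 := genHarmonic_three_le_two (2 * n + k + 2)
  have hb : ((n : ℝ) + k + 1) ^ 2 * ((n + k)! * n !) ≤ (2 * n + k + 2)! := by
    rw [Nat.factorial_succ]
    push_cast
    calc ((n : ℝ) + k + 1) ^ 2 * ((n + k)! * n !)
        = ((n : ℝ) + k + 1) * (((n : ℝ) + k + 1) * ((n + k)! * n !)) := by ring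
      _ ≤ _ := by
        refine mul_le_mul ?_ (mul_factorial_le n k) (by positivity) (by positivity)
        linarith
  have hg : ((n : ℝ) + 1) ^ 2 * (n ! : ℝ) ^ 2 ≤ (2 * n + 2)! := by
    have := factorial_sq_le_factorial_two_mul (n + 1)
    rw [Nat.factorial_succ n] at this
    push_cast at this
    rw [← mul_pow]
    exact this
  have hc : ((n + k)! : ℝ) ^ 4 * (n ! : ℝ) ^ 6 /
      (((2 * n + k + 2)! : ℝ) ^ 4 * ((2 * n + 2)! : ℝ)) ≤
      1 / (((n : ℝ) + k + 1) ^ 8 * ((n : ℝ) + 1) ^ 2) := by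
    rw [div_le_div_iff₀ (by positivity) (by positivity)]
    have := mul_le_mul (pow_le_pow_left₀ (by positivity) hb 4) hg (by positivity) (by positivity)
    linarith
  calc |wzG n k| = ((n + k)! : ℝ) ^ 4 * (n ! : ℝ) ^ 6 /
          (((2 * n + k + 2)! : ℝ) ^ 4 * ((2 * n + 2)! : ℝ)) *
        |certPoly n k * (genHarmonic 3 (n + k) + genHarmonic 3 (2 * n + k + 2)) +
          certRemainder n k| := by
        unfold wzG
        rw [abs_mul, abs_div, abs_mul, abs_mul, abs_pow, abs_neg, abs_one, one_pow, one_mul]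
        congr 2 <;> [congr 1; skip] <;> exact abs_of_nonneg (by positivity)
    _ ≤ 1 / (((n : ℝ) + k + 1) ^ 8 * ((n : ℝ) + 1) ^ 2) *
        (10 ^ 4 * ((n : ℝ) + k + 1) ^ 7 * 4 + 10 ^ 4 * ((n : ℝ) + k + 1) ^ 7) := by
        refine mul_le_mul hc ((abs_add_le _ _).trans (add_le_add ?_ (abs_certRemainder_le n k)))
          (abs_nonneg _) (by positivity)
        rw [abs_mul, abs_of_nonneg (add_nonneg h1 h2)]
        exact mul_le_mul (abs_certPoly_le n k) (by linarith) (by positivity) (by positivity)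
    _ = 5 * 10 ^ 4 / (((n : ℝ) + 1) ^ 2 * (n + k + 1)) := by
        field_simp
        norm_num
    _ ≤ _ := by
        gcongr
        norm_num

lemma summable_inv_succ_sq : Summable fun k : ℕ => 1 / ((k : ℝ) + 1) ^ 2 := by
  simpa using (summable_nat_add_iff 1).2 (Real.summable_one_div_nat_pow.2 one_lt_two)

lemma summable_wzF (n : ℕ) : Summable (wzF n) := by
  refine Summable.of_norm_bounded (summable_inv_succ_sq.mul_left (12 / ((n : ℝ) + 1))) fun k => ?_
  rw [Real.norm_eq_abs, div_mul_div_comm, mul_one]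
  exact abs_wzF_le n k

lemma summable_wzG_zero : Summable fun n => wzG n 0 := by
  refine Summable.of_norm_bounded (summable_inv_succ_sq.mul_left (10 ^ 5)) fun n => ?_
  rw [Real.norm_eq_abs, ← mul_div_assoc, mul_one]
  refine (abs_wzG_le n 0).trans ?_
  gcongr
  exact le_mul_of_one_le_right (by positivity) (by simp)

lemma tendsto_wzG (n : ℕ) : Tendsto (wzG n) atTop (𝓝 0) := by
  refine squeeze_zero_norm (a := fun k : ℕ => 10 ^ 5 * (1 / ((k : ℝ) + 1))) (fun k => ?_) ?_
  · rw [Real.norm_eq_abs, ← mul_div_assoc, mul_one]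
    refine (abs_wzG_le n k).trans ?_
    have hn : (0 : ℝ) ≤ n := n.cast_nonneg
    gcongr
    nlinarith [mul_nonneg hn hn, mul_nonneg hn (k.cast_nonneg (α := ℝ)),
      mul_nonneg (mul_nonneg hn hn) (k.cast_nonneg (α := ℝ)), mul_nonneg (mul_nonneg hn hn) hn]
  · simpa using (tendsto_one_div_add_atTop_nhds_zero_nat (𝕜 := ℝ)).const_mul (10 ^ 5)

lemma tendsto_tsum_wzF : Tendsto (fun n => ∑' k, wzF n k) atTop (𝓝 0) := by
  refine squeeze_zero_norm
    (a := fun n : ℕ => 12 * (∑' k : ℕ, 1 / ((k : ℝ) + 1) ^ 2) * (1 / ((n : ℝ) + 1)))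
    (fun n => ?_) ?_
  · have h := tsum_of_norm_bounded (f := wzF n)
      (summable_inv_succ_sq.hasSum.mul_left (12 / ((n : ℝ) + 1))) fun k => ?_
    · refine h.trans_eq ?_
      ring
    · rw [Real.norm_eq_abs, div_mul_div_comm, mul_one]
      exact abs_wzF_le n k
  · simpa only [mul_zero] using (tendsto_one_div_add_atTop_nhds_zero_nat (𝕜 := ℝ)).const_mul
      (12 * (∑' k : ℕ, 1 / ((k : ℝ) + 1) ^ 2))

lemma tsum_wzF_succ (n : ℕ) : ∑' k, wzF (n + 1) k = ∑' k, wzF n k - wzG n 0 := by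
  have h₁ : Tendsto (fun K => ∑ k ∈ range K, (wzF (n + 1) k - wzF n k)) atTop
      (𝓝 (∑' k, wzF (n + 1) k - ∑' k, wzF n k)) :=
    ((summable_wzF (n + 1)).hasSum.sub (summable_wzF n).hasSum).tendsto_sum_nat
  have h₂ : Tendsto (fun K => ∑ k ∈ range K, (wzF (n + 1) k - wzF n k)) atTop
      (𝓝 (0 - wzG n 0)) := by
    simp_rw [wz_identity, sum_range_sub]
    exact (tendsto_wzG n).sub_const _
  linarith [tendsto_nhds_unique h₁ h₂]

lemma tsum_wzG_zero : ∑' n, wzG n 0 = ∑' k, wzF 0 k := by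
  have hsum (N : ℕ) : ∑ n ∈ range N, wzG n 0 = ∑' k, wzF 0 k - ∑' k, wzF N k := by
    induction N with
    | zero => simp
    | succ N ih => rw [sum_range_succ, ih, tsum_wzF_succ]; ring
  refine tendsto_nhds_unique summable_wzG_zero.hasSum.tendsto_sum_nat ?_
  simp_rw [hsum]
  simpa using tendsto_tsum_wzF.const_sub (∑' k, wzF 0 k)

lemma sum_wzF_zero (K : ℕ) : ∑ k ∈ range K, wzF 0 k = 2 * genHarmonic 3 K ^ 2 := by
  induction K with
  | zero => simp [genHarmonic]
  | succ K ih =>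
    have hK : (K : ℝ) + 1 ≠ 0 := by positivity
    have hf : (K ! : ℝ) ≠ 0 := by positivity
    rw [sum_range_succ, ih]
    simp only [wzF, mul_zero, zero_add, Nat.factorial_succ, genHarmonic_succ]
    push_cast
    simp only [pow_zero, Nat.factorial_zero, Nat.cast_one, one_pow, mul_one, one_mul]
    field_simp
    ring

lemma tendsto_genHarmonic_three :
    Tendsto (fun K => (genHarmonic 3 K : ℂ)) atTop (𝓝 (riemannZeta 3)) := by
  have hs : Summable fun k : ℕ => 1 / ((k : ℝ) + 1) ^ 3 := by
    simpa using (summable_nat_add_iff 1).2 (Real.summable_one_div_nat_pow.2 (by norm_num : 1 < 3))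
  have hz : riemannZeta 3 = ((∑' k : ℕ, 1 / ((k : ℝ) + 1) ^ 3 : ℝ) : ℂ) := by
    have := zeta_eq_tsum_one_div_nat_add_one_cpow (s := 3) (by norm_num)
    rw [this, Complex.ofReal_tsum]
    refine tsum_congr fun k => ?_
    push_cast
    norm_cast
  rw [hz]
  exact (Complex.continuous_ofReal.tendsto _).comp hs.hasSum.tendsto_sum_nat

lemma tsum_wzG_zero_eq_zeta : ((∑' n, wzG n 0 : ℝ) : ℂ) = 2 * riemannZeta 3 ^ 2 := by
  rw [tsum_wzG_zero]
  refine tendsto_nhds_unique ((Complex.continuous_ofReal.tendsto _).comp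
    (summable_wzF 0).hasSum.tendsto_sum_nat) ?_
  simp only [Function.comp_def, sum_wzF_zero]
  push_cast
  exact (tendsto_genHarmonic_three.pow 2).const_mul 2

lemma risingFactorial_one (n : ℕ) : risingFactorial 1 n = n ! := by
  rw [risingFactorial, ← prod_range_add_one_eq_factorial]
  push_cast
  exact prod_congr rfl fun _ _ => add_comm _ _

lemma risingFactorial_half (n : ℕ) :
    risingFactorial (1 / 2) n = (2 * n)! / (4 ^ n * n !) := by
  induction n with
  | zero => simp [risingFactorial]
  | succ n ih =>
    have hr : risingFactorial (1 / 2) (n + 1) = risingFactorial (1 / 2) n * (1 / 2 + n) :=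
      prod_range_succ _ _
    have hn : (n : ℝ) + 1 ≠ 0 := by positivity
    rw [hr, ih, show 2 * (n + 1) = 2 * n + 1 + 1 by ring]
    simp only [Nat.factorial_succ]
    push_cast
    field_simp
    ring

lemma summand_eq_neg_wzG (n : ℕ) :
    (-1 / 2 ^ 10 : ℝ) ^ (n + 1) * (risingFactorial 1 (n + 1)) ^ 5 /
        (risingFactorial (1 / 2) (n + 1)) ^ 5 *
        (-(215 * ((n : ℝ) + 1) ^ 2 - 180 * ((n : ℝ) + 1) + 36) / ((n : ℝ) + 1) ^ 8 +
          (genHarmonic 3 (n + 1) + genHarmonic 3 (2 * (n + 1))) *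
            (205 * ((n : ℝ) + 1) ^ 2 - 160 * ((n : ℝ) + 1) + 32) /
            ((n : ℝ) + 1) ^ 5) = -wzG n 0 := by
  have hn : (n : ℝ) + 1 ≠ 0 := by positivity
  have hp : (-1 / 2 ^ 10 : ℝ) ^ (n + 1) = -(-1) ^ n / (4 ^ (n + 1)) ^ 5 := by
    rw [div_pow, pow_succ (-1 : ℝ), mul_neg_one, ← pow_mul (4 : ℝ), mul_comm (n + 1) 5, pow_mul]
    norm_num
  have h4 : (4 : ℝ) ^ (n + 1) ≠ 0 := by positivity
  have hf : (n ! : ℝ) ≠ 0 := by positivity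
  have hg : ((2 * n + 2)! : ℝ) ≠ 0 := by positivity
  rw [risingFactorial_one, risingFactorial_half, hp, show 2 * (n + 1) = 2 * n + 2 by ring]
  simp only [wzG, certPoly, certRemainder, add_zero, genHarmonic_succ 3 n, Nat.factorial_succ n]
  push_cast
  generalize genHarmonic 3 (2 * n + 2) = h₂
  generalize genHarmonic 3 n = h₁
  generalize ((2 * n + 2)! : ℝ) = g at *
  generalize (n ! : ℝ) = f at *
  generalize (4 : ℝ) ^ (n + 1) = q at *
  generalize (-1 : ℝ) ^ n = σ
  field_simp
  ring

/-- With `p₀(n) = 205n²−160n+32` and `p₂(n) = 215n²−180n+36`: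
`∑_{n≥1} (−1/2^10)^n (1)ₙ^5/(1/2)ₙ^5 [ −p₂(n)/n^8 + (H_n^{(3)} + H_{2n}^{(3)})p₀(n)/n^5 ]
  = −2ζ(3)²`. -/
theorem wz_zeta3_sq_series :
    ∑' n : ℕ, ((((-1 / 2 ^ 10 : ℝ) ^ (n + 1) * (risingFactorial 1 (n + 1)) ^ 5 /
        (risingFactorial (1 / 2) (n + 1)) ^ 5 *
        (-(215 * ((n : ℝ) + 1) ^ 2 - 180 * ((n : ℝ) + 1) + 36) / ((n : ℝ) + 1) ^ 8 +
          (genHarmonic 3 (n + 1) + genHarmonic 3 (2 * (n + 1))) *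
            (205 * ((n : ℝ) + 1) ^ 2 - 160 * ((n : ℝ) + 1) + 32) /
            ((n : ℝ) + 1) ^ 5) : ℝ)) : ℂ)
      = -2 * (riemannZeta 3) ^ 2 := by
  simp_rw [summand_eq_neg_wzG]
  rw [← Complex.ofReal_tsum, tsum_neg, Complex.ofReal_neg, tsum_wzG_zero_eq_zeta]
  ring
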